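/- First step of diagonal-formula elimination: suppose ⊢^A Γ{[◇A⊥_Σ, Δ]} in the annotated nested sequent calculus for GL (with cuts on A), let B ∈ Σ, and suppose Δ contains no bracket annotated with B. Then there exists Σ' ⊆ Σ \ {B} such that ⊢^A Γ{[◇A⊥_{Σ'}, ◇B⊥, Δ]}. -/

import Mathlib

/-- Formulas of GL in negation normal form. -/
inductive Formula : Type where
  | pos : ℕ → Formula
  | neg : ℕ → Formula
  | and : Formula → Formula → Formula
  | or  : Formula → Formula → Formula
  | box : Formula → Formula
  | dia : Formula → Formula
deriving DecidableEq

/-- Negation `A⊥` of a formula, via De Morgan duality. -/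
def Formula.negate : Formula → Formula
  | .pos a => .neg a
  | .neg a => .pos a
  | .and A B => .or A.negate B.negate
  | .or A B => .and A.negate B.negate
  | .box A => .dia A.negate
  | .dia A => .box A.negate

/-- An element of a nested sequent: a formula or a nested (bracketed) sequent. -/
inductive SeqElem : Type where
  | fml : Formula → SeqElem
  | nest : List SeqElem → SeqElem

/-- A nested sequent. -/
abbrev Sequent := List SeqElem

/-- Unary contexts: a nested sequent with a single hole. -/
inductive Ctx : Type where
  | hole : Sequent → Ctx
  | nest : Sequent → Ctx → Ctx

/-- Fill the hole of a context with a sequent. -/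
def Ctx.fill : Ctx → Sequent → Sequent
  | .hole Δ, Γ => Δ ++ Γ
  | .nest Δ c, Γ => .nest (c.fill Γ) :: Δ

/-- Depth of a context: number of brackets surrounding the hole. -/
def Ctx.depth : Ctx → ℕ
  | .hole _ => 0
  | .nest _ c => c.depth + 1

/-- Equivalence of nested sequents up to (deep) exchange. -/
inductive SeqEquiv : Sequent → Sequent → Prop where
  | nil : SeqEquiv [] []
  | cons {e : SeqElem} {Γ Δ : Sequent} : SeqEquiv Γ Δ → SeqEquiv (e :: Γ) (e :: Δ)
  | consNest {Γ' Δ' Γ Δ : Sequent} :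
      SeqEquiv Γ' Δ' → SeqEquiv Γ Δ → SeqEquiv (.nest Γ' :: Γ) (.nest Δ' :: Δ)
  | swap (a b : SeqElem) (Γ : Sequent) : SeqEquiv (a :: b :: Γ) (b :: a :: Γ)
  | trans {Γ Δ Θ : Sequent} : SeqEquiv Γ Δ → SeqEquiv Δ Θ → SeqEquiv Γ Θ

/-- `DerivH n Γ`: `Γ` has a cut-free derivation of height at most `n`. -/
inductive DerivH : ℕ → Sequent → Prop where
  | id (n : ℕ) (c : Ctx) (a : ℕ) :
      DerivH n (c.fill [.fml (.pos a), .fml (.neg a)])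
  | and {n : ℕ} {c : Ctx} {A B : Formula} :
      DerivH n (c.fill [.fml A]) → DerivH n (c.fill [.fml B]) →
      DerivH (n + 1) (c.fill [.fml (.and A B)])
  | or {n : ℕ} {c : Ctx} {A B : Formula} :
      DerivH n (c.fill [.fml A, .fml B]) →
      DerivH (n + 1) (c.fill [.fml (.or A B)])
  | box {n : ℕ} {c : Ctx} {A : Formula} :
      DerivH n (c.fill [.nest [.fml (.dia A.negate), .fml A]]) →
      DerivH (n + 1) (c.fill [.fml (.box A)])
  | dia {n : ℕ} (c d : Ctx) {A : Formula} :
      0 < d.depth →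
      DerivH n (c.fill (d.fill [.fml A] ++ [.fml (.dia A)])) →
      DerivH (n + 1) (c.fill (d.fill [] ++ [.fml (.dia A)]))
  | exch {n : ℕ} {Γ Δ : Sequent} : SeqEquiv Γ Δ → DerivH n Γ → DerivH n Δ
  | up {n : ℕ} {Γ : Sequent} : DerivH n Γ → DerivH (n + 1) Γ

/-- Derivability where cut is permitted on formulas satisfying `P`. -/
inductive DerivWith (P : Formula → Prop) : Sequent → Prop where
  | id (c : Ctx) (a : ℕ) :
      DerivWith P (c.fill [.fml (.pos a), .fml (.neg a)])
  | and {c : Ctx} {A B : Formula} :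
      DerivWith P (c.fill [.fml A]) → DerivWith P (c.fill [.fml B]) →
      DerivWith P (c.fill [.fml (.and A B)])
  | or {c : Ctx} {A B : Formula} :
      DerivWith P (c.fill [.fml A, .fml B]) →
      DerivWith P (c.fill [.fml (.or A B)])
  | box {c : Ctx} {A : Formula} :
      DerivWith P (c.fill [.nest [.fml (.dia A.negate), .fml A]]) →
      DerivWith P (c.fill [.fml (.box A)])
  | dia (c d : Ctx) {A : Formula} :
      0 < d.depth →
      DerivWith P (c.fill (d.fill [.fml A] ++ [.fml (.dia A)])) →
      DerivWith P (c.fill (d.fill [] ++ [.fml (.dia A)]))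
  | cut {c : Ctx} {A : Formula} : P A →
      DerivWith P (c.fill [.fml A]) → DerivWith P (c.fill [.fml A.negate]) →
      DerivWith P (c.fill [])
  | exch {Γ Δ : Sequent} : SeqEquiv Γ Δ → DerivWith P Γ → DerivWith P Δ

/-- Cut-free derivability. -/
abbrev Deriv : Sequent → Prop := DerivWith (fun _ => False)
/-- Elements of an annotated nested sequent: ordinary formulas, diamond
formulas `◇A_Σ` annotated with a finite set of formulas, and brackets
`[Δ]_B` annotated with a formula. -/
inductive AElem : Type where
  | fml : Formula → AElem
  | dia : Formula → Finset Formula → AElem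
  | nest : Formula → List AElem → AElem

/-- Annotated nested sequents. -/
abbrev ASeq := List AElem

/-- Annotated unary contexts. -/
inductive ACtx : Type where
  | hole : ASeq → ACtx
  | nest : Formula → ASeq → ACtx → ACtx

def ACtx.fill : ACtx → ASeq → ASeq
  | .hole Δ, Γ => Δ ++ Γ
  | .nest B Δ c, Γ => .nest B (c.fill Γ) :: Δ

/-- Formula occurrence as an annotated element: a diamond formula carries the
annotation set `s`, any other formula is unannotated. -/
def emb (A : Formula) (s : Finset Formula) : AElem :=
  match A with
  | .dia C => .dia C s
  | _ => .fml A

mutual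
/-- All diamond annotation sets in the element are empty. -/
def AElem.diaEmpty : AElem → Prop
  | .fml _ => True
  | .dia _ s => s = ∅
  | .nest _ Δ => ASeq.diaEmpty Δ
/-- All diamond annotation sets in the sequent are empty. -/
def ASeq.diaEmpty : ASeq → Prop
  | [] => True
  | e :: Δ => e.diaEmpty ∧ ASeq.diaEmpty Δ
end

mutual
/-- The element contains no bracket annotated with `B`. -/
def AElem.noBr (B : Formula) : AElem → Prop
  | .fml _ => True
  | .dia _ _ => True
  | .nest C Δ => C ≠ B ∧ ASeq.noBr B Δ
/-- The sequent contains no bracket annotated with `B`. -/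
def ASeq.noBr (B : Formula) : ASeq → Prop
  | [] => True
  | e :: Δ => e.noBr B ∧ ASeq.noBr B Δ
end

mutual
/-- The operation `(−)⁺`: weaken every bracket `[Δ']_C` to `[Δ'⁺, ◇C⊥]_C`. -/
def AElem.plus : AElem → AElem
  | .fml A => .fml A
  | .dia A s => .dia A s
  | .nest C Δ => .nest C (AElem.dia C.negate ∅ :: ASeq.plus Δ)
def ASeq.plus : ASeq → ASeq
  | [] => []
  | e :: Δ => e.plus :: ASeq.plus Δ
end

mutual
/-- Erase all annotations. -/
def AElem.erase : AElem → SeqElem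
  | .fml A => .fml A
  | .dia A _ => .fml (.dia A)
  | .nest _ Δ => .nest (ASeq.erase Δ)
def ASeq.erase : ASeq → Sequent
  | [] => []
  | e :: Δ => e.erase :: ASeq.erase Δ
end

/-- Equivalence of annotated sequents up to (deep) exchange. -/
inductive AEquiv : ASeq → ASeq → Prop where
  | nil : AEquiv [] []
  | cons {e : AElem} {Γ Δ : ASeq} : AEquiv Γ Δ → AEquiv (e :: Γ) (e :: Δ)
  | consNest {B : Formula} {Γ' Δ' Γ Δ : ASeq} :
      AEquiv Γ' Δ' → AEquiv Γ Δ → AEquiv (.nest B Γ' :: Γ) (.nest B Δ' :: Δ)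
  | swap (a b : AElem) (Γ : ASeq) : AEquiv (a :: b :: Γ) (b :: a :: Γ)
  | trans {Γ Δ Θ : ASeq} : AEquiv Γ Δ → AEquiv Δ Θ → AEquiv Γ Θ

/-- Merging two annotated sequents with the same underlying skeleton and
identical bracket annotations: diamond annotation sets are unioned. -/
inductive AMerge : ASeq → ASeq → ASeq → Prop where
  | nil : AMerge [] [] []
  | fml {C : Formula} {Γ₁ Γ₂ Γ : ASeq} :
      AMerge Γ₁ Γ₂ Γ → AMerge (.fml C :: Γ₁) (.fml C :: Γ₂) (.fml C :: Γ)
  | dia {A : Formula} {s₁ s₂ : Finset Formula} {Γ₁ Γ₂ Γ : ASeq} :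
      AMerge Γ₁ Γ₂ Γ →
      AMerge (.dia A s₁ :: Γ₁) (.dia A s₂ :: Γ₂) (.dia A (s₁ ∪ s₂) :: Γ)
  | nest {B : Formula} {Δ₁ Δ₂ Δ Γ₁ Γ₂ Γ : ASeq} :
      AMerge Δ₁ Δ₂ Δ → AMerge Γ₁ Γ₂ Γ →
      AMerge (.nest B Δ₁ :: Γ₁) (.nest B Δ₂ :: Γ₂) (.nest B Δ :: Γ)

/-- Merging two annotated contexts. -/
inductive ACtxMerge : ACtx → ACtx → ACtx → Prop where
  | hole {Δ₁ Δ₂ Δ : ASeq} : AMerge Δ₁ Δ₂ Δ →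
      ACtxMerge (.hole Δ₁) (.hole Δ₂) (.hole Δ)
  | nest {B : Formula} {Δ₁ Δ₂ Δ : ASeq} {c₁ c₂ c : ACtx} :
      AMerge Δ₁ Δ₂ Δ → ACtxMerge c₁ c₂ c →
      ACtxMerge (.nest B Δ₁ c₁) (.nest B Δ₂ c₂) (.nest B Δ c)

/-- Annotated derivability, with cut permitted on formulas satisfying `P`. -/
inductive ADeriv (P : Formula → Prop) : ASeq → Prop where
  | id {c : ACtx} {a : ℕ} :
      ASeq.diaEmpty (c.fill [.fml (.pos a), .fml (.neg a)]) →
      ADeriv P (c.fill [.fml (.pos a), .fml (.neg a)])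
  | and {c₁ c₂ c : ACtx} {A B : Formula} {s₁ s₂ : Finset Formula} :
      ACtxMerge c₁ c₂ c →
      ADeriv P (c₁.fill [emb A s₁]) → ADeriv P (c₂.fill [emb B s₂]) →
      ADeriv P (c.fill [.fml (.and A B)])
  | or {c : ACtx} {A B : Formula} {s₁ s₂ : Finset Formula} :
      ADeriv P (c.fill [emb A s₁, emb B s₂]) →
      ADeriv P (c.fill [.fml (.or A B)])
  | box {c : ACtx} {A : Formula} {S : Finset Formula} {s : Finset Formula} :
      ADeriv P (c.fill [.nest A [.dia A.negate S, emb A s]]) →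
      ADeriv P (c.fill [.fml (.box A)])
  | dia {c d : ACtx} {A B : Formula} {S s : Finset Formula} {Δ' : ASeq} :
      ADeriv P (c.fill (d.fill [.nest B (emb A s :: Δ')] ++ [.dia A S])) →
      ADeriv P (c.fill (d.fill [.nest B Δ'] ++ [.dia A (insert B S)]))
  | cut {c₁ c₂ c : ACtx} {A : Formula} {s₁ s₂ : Finset Formula} :
      P A → ACtxMerge c₁ c₂ c →
      ADeriv P (c₁.fill [emb A s₁]) → ADeriv P (c₂.fill [emb A.negate s₂]) →
      ADeriv P (c.fill [])
  | exch {Γ Δ : ASeq} : AEquiv Γ Δ → ADeriv P Γ → ADeriv P Δ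

theorem ASeq.ind {P : ASeq → Prop} (nil : P [])
    (fml : ∀ F l, P l → P (.fml F :: l))
    (dia : ∀ D S l, P l → P (.dia D S :: l))
    (nest : ∀ E l' l, P l' → P l → P (.nest E l' :: l)) (l : ASeq) : P l :=
  AElem.rec_1 (motive_1 := fun e => ∀ l, P l → P (e :: l)) (motive_2 := P)
    fml dia (fun E l' h l => nest E l' l h) nil (fun _ l h hl => h l hl) l

/-- Elements of a marked annotated sequent. Diamonds are either `fixed` (their annotation is to be
preserved), `free` (their annotation may be changed), or marked occurrences of the diagonal
formula whose annotation is to be shrunk. -/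
inductive MElem : Type where
  | fml : Formula → MElem
  | fixed : Formula → Finset Formula → MElem
  | free : Formula → Finset Formula → MElem
  | mark : Finset Formula → MElem
  | nest : Formula → List MElem → MElem

abbrev MSeq := List MElem

theorem MSeq.ind {P : MSeq → Prop} (nil : P [])
    (fml : ∀ F l, P l → P (.fml F :: l))
    (fixed : ∀ D S l, P l → P (.fixed D S :: l))
    (free : ∀ D S l, P l → P (.free D S :: l))
    (mark : ∀ S l, P l → P (.mark S :: l))
    (nest : ∀ E l' l, P l' → P l → P (.nest E l' :: l)) (l : MSeq) : P l :=
  MElem.rec_1 (motive_1 := fun e => ∀ l, P l → P (e :: l)) (motive_2 := P)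
    fml fixed free mark (fun E l' h l => nest E l' l h) nil (fun _ l h hl => h l hl) l

/-- Marked unary contexts. -/
inductive MCtx : Type where
  | hole : MSeq → MCtx
  | nest : Formula → MSeq → MCtx → MCtx

def MCtx.fill : MCtx → MSeq → MSeq
  | .hole Δ, Γ => Δ ++ Γ
  | .nest B Δ c, Γ => .nest B (c.fill Γ) :: Δ

/-- Formula occurrence as a marked element; diamonds are free. -/
def memb (F : Formula) (s : Finset Formula) : MElem :=
  match F with
  | .dia C => .free C s
  | _ => .fml F

mutual
/-- Forget the marking; marked diamonds stand for `◇A⊥`. -/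
def MElem.src (A : Formula) : MElem → AElem
  | .fml F => .fml F
  | .fixed D S => .dia D S
  | .free D S => .dia D S
  | .mark S => .dia A.negate S
  | .nest E l => .nest E (MSeq.src A l)
def MSeq.src (A : Formula) : MSeq → ASeq
  | [] => []
  | e :: l => e.src A :: MSeq.src A l
end

theorem MSeq.src_eq_map (A : Formula) (l : MSeq) : MSeq.src A l = l.map (MElem.src A) := by
  induction l with
  | nil => rfl
  | cons e l ih => simp [MSeq.src, ih]

def MCtx.src (A : Formula) : MCtx → ACtx
  | .hole l => .hole (MSeq.src A l)
  | .nest E l c => .nest E (MSeq.src A l) (c.src A)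

theorem MElem.src_memb (A F : Formula) (s : Finset Formula) : (memb F s).src A = emb F s := by
  cases F <;> rfl

theorem MSeq.src_append (A : Formula) (l l' : MSeq) :
    MSeq.src A (l ++ l') = MSeq.src A l ++ MSeq.src A l' := by
  simp [MSeq.src_eq_map]

theorem MCtx.src_fill (A : Formula) (c : MCtx) (l : MSeq) :
    MSeq.src A (c.fill l) = (c.src A).fill (MSeq.src A l) := by
  induction c with
  | hole Δ => exact MSeq.src_append A _ _
  | nest E Δ c ih => simp [MCtx.fill, MCtx.src, ACtx.fill, MSeq.src, MElem.src, ih]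

theorem MSeq.src_eq_append {A : Formula} {M : MSeq} {X Y : ASeq} (h : MSeq.src A M = X ++ Y) :
    ∃ M₁ M₂, M = M₁ ++ M₂ ∧ MSeq.src A M₁ = X ∧ MSeq.src A M₂ = Y := by
  simp only [MSeq.src_eq_map] at *
  exact List.map_eq_append_iff.1 h

theorem MSeq.src_eq_cons {A : Formula} {M : MSeq} {x : AElem} {Y : ASeq}
    (h : MSeq.src A M = x :: Y) :
    ∃ e N, M = e :: N ∧ e.src A = x ∧ MSeq.src A N = Y := by
  simp only [MSeq.src_eq_map] at *
  exact List.map_eq_cons_iff.1 h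

theorem MSeq.src_eq_nil {A : Formula} {M : MSeq} (h : MSeq.src A M = []) : M = [] := by
  simpa [MSeq.src_eq_map] using h

theorem MElem.src_eq_fml {A F : Formula} {e : MElem} (h : e.src A = .fml F) : e = .fml F := by
  cases e <;> simp_all [MElem.src]

theorem MElem.src_eq_nest {A E : Formula} {e : MElem} {X : ASeq} (h : e.src A = .nest E X) :
    ∃ l, e = .nest E l ∧ MSeq.src A l = X := by
  cases e <;> simp_all [MElem.src]

theorem MSeq.src_eq_singleton {A : Formula} {M : MSeq} {x : AElem} (h : MSeq.src A M = [x]) :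
    ∃ e, M = [e] ∧ e.src A = x := by
  obtain ⟨e, N, rfl, he, hN⟩ := MSeq.src_eq_cons h
  exact ⟨e, by rw [MSeq.src_eq_nil hN], he⟩

theorem MSeq.src_eq_fill {A : Formula} {c : ACtx} {M : MSeq} {Γ : ASeq}
    (h : MSeq.src A M = c.fill Γ) :
    ∃ (d : MCtx) (N : MSeq), M = d.fill N ∧ d.src A = c ∧ MSeq.src A N = Γ := by
  induction c generalizing M with
  | hole Δ =>
    obtain ⟨M₁, M₂, rfl, h₁, h₂⟩ := MSeq.src_eq_append h
    exact ⟨.hole M₁, M₂, rfl, by simp [MCtx.src, h₁], h₂⟩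
  | nest E Δ c ih =>
    obtain ⟨e, N, rfl, he, hN⟩ := MSeq.src_eq_cons h
    obtain ⟨l, rfl, hl⟩ := MElem.src_eq_nest he
    obtain ⟨d, N', rfl, hd, hN'⟩ := ih hl
    exact ⟨.nest E N d, N', rfl, by simp [MCtx.src, hN, hd], hN'⟩

/-- Equivalence of marked sequents up to (deep) exchange. -/
inductive MEquiv : MSeq → MSeq → Prop where
  | nil : MEquiv [] []
  | cons {e : MElem} {Γ Δ : MSeq} : MEquiv Γ Δ → MEquiv (e :: Γ) (e :: Δ)
  | consNest {B : Formula} {Γ' Δ' Γ Δ : MSeq} :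
      MEquiv Γ' Δ' → MEquiv Γ Δ → MEquiv (.nest B Γ' :: Γ) (.nest B Δ' :: Δ)
  | swap (a b : MElem) (Γ : MSeq) : MEquiv (a :: b :: Γ) (b :: a :: Γ)
  | trans {Γ Δ Θ : MSeq} : MEquiv Γ Δ → MEquiv Δ Θ → MEquiv Γ Θ

theorem AEquiv.of_perm {X Y : ASeq} (h : X.Perm Y) : AEquiv X Y := by
  induction h with
  | nil => exact .nil
  | cons _ _ ih => exact .cons ih
  | swap a b l => exact .swap _ _ _
  | trans _ _ ih₁ ih₂ => exact .trans ih₁ ih₂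

theorem AEquiv.append_left (Z : ASeq) {X Y : ASeq} (h : AEquiv X Y) :
    AEquiv (Z ++ X) (Z ++ Y) := by
  induction Z with
  | nil => exact h
  | cons _ _ ih => exact .cons ih

theorem AEquiv.fill (c : ACtx) {X Y : ASeq} (h : AEquiv X Y) :
    AEquiv (c.fill X) (c.fill Y) := by
  induction c with
  | hole Δ => exact h.append_left Δ
  | nest E Δ c ih => exact .consNest ih (.of_perm (.refl _))

theorem MEquiv.of_perm {X Y : MSeq} (h : X.Perm Y) : MEquiv X Y := by
  induction h with
  | nil => exact .nil
  | cons _ _ ih => exact .cons ih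
  | swap a b l => exact .swap _ _ _
  | trans _ _ ih₁ ih₂ => exact .trans ih₁ ih₂

theorem MEquiv.append_left (Z : MSeq) {X Y : MSeq} (h : MEquiv X Y) :
    MEquiv (Z ++ X) (Z ++ Y) := by
  induction Z with
  | nil => exact h
  | cons _ _ ih => exact .cons ih

theorem MEquiv.fill (c : MCtx) {X Y : MSeq} (h : MEquiv X Y) :
    MEquiv (c.fill X) (c.fill Y) := by
  induction c with
  | hole Δ => exact h.append_left Δ
  | nest E Δ c ih => exact .consNest ih (.of_perm (.refl _))

theorem MEquiv.symm {X Y : MSeq} (h : MEquiv X Y) : MEquiv Y X := by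
  induction h with
  | nil => exact .nil
  | cons _ ih => exact .cons ih
  | consNest _ _ ih₁ ih₂ => exact .consNest ih₁ ih₂
  | swap a b l => exact .swap _ _ _
  | trans _ _ ih₁ ih₂ => exact .trans ih₂ ih₁

theorem AEquiv.lift {A : Formula} {X₀ X : ASeq} (h : AEquiv X₀ X) {M : MSeq}
    (hM : MSeq.src A M = X) : ∃ M₀, MEquiv M₀ M ∧ MSeq.src A M₀ = X₀ := by
  induction h generalizing M with
  | nil => exact ⟨M, .of_perm (.refl _), hM⟩
  | cons _ ih =>
    obtain ⟨e, N, rfl, he, hN⟩ := MSeq.src_eq_cons hM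
    obtain ⟨N₀, h₁, h₂⟩ := ih hN
    exact ⟨e :: N₀, .cons h₁, by simp [MSeq.src, he, h₂]⟩
  | consNest _ _ ih₁ ih₂ =>
    obtain ⟨e, N, rfl, he, hN⟩ := MSeq.src_eq_cons hM
    obtain ⟨l, rfl, hl⟩ := MElem.src_eq_nest he
    obtain ⟨l₀, h₁, h₂⟩ := ih₁ hl
    obtain ⟨N₀, h₃, h₄⟩ := ih₂ hN
    exact ⟨.nest _ l₀ :: N₀, .consNest h₁ h₃, by simp [MSeq.src, MElem.src, h₂, h₄]⟩
  | swap a b Γ =>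
    obtain ⟨e, N, rfl, he, hN⟩ := MSeq.src_eq_cons hM
    obtain ⟨e', N, rfl, he', hN⟩ := MSeq.src_eq_cons hN
    exact ⟨e' :: e :: N, .swap _ _ _, by simp [MSeq.src, he, he', hN]⟩
  | trans _ _ ih₁ ih₂ =>
    obtain ⟨N, h₁, h₂⟩ := ih₂ hM
    obtain ⟨N', h₃, h₄⟩ := ih₁ h₂
    exact ⟨N', h₃.trans h₁, h₄⟩

/-- Composition of contexts, up to exchange. -/
def MCtx.comp : MCtx → MCtx → MCtx
  | .hole l, .hole l' => .hole (l ++ l')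
  | .hole l, .nest E l' d => .nest E (l ++ l') d
  | .nest E l c, d => .nest E l (c.comp d)

theorem MCtx.comp_fill (c d : MCtx) (l : MSeq) :
    MEquiv ((c.comp d).fill l) (c.fill (d.fill l)) := by
  induction c with
  | hole Δ =>
    cases d with
    | hole l' => exact .of_perm (by simp [MCtx.comp, MCtx.fill])
    | nest E l' d => exact .of_perm List.perm_middle.symm
  | nest E Δ c ih => exact .consNest ih (.of_perm (.refl _))

/-- Merging of marked sequents. -/
inductive MMerge : MSeq → MSeq → MSeq → Prop where
  | nil : MMerge [] [] []
  | fml {C : Formula} {Γ₁ Γ₂ Γ : MSeq} :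
      MMerge Γ₁ Γ₂ Γ → MMerge (.fml C :: Γ₁) (.fml C :: Γ₂) (.fml C :: Γ)
  | fixed {A : Formula} {s₁ s₂ : Finset Formula} {Γ₁ Γ₂ Γ : MSeq} :
      MMerge Γ₁ Γ₂ Γ →
      MMerge (.fixed A s₁ :: Γ₁) (.fixed A s₂ :: Γ₂) (.fixed A (s₁ ∪ s₂) :: Γ)
  | free {A : Formula} {s₁ s₂ : Finset Formula} {Γ₁ Γ₂ Γ : MSeq} :
      MMerge Γ₁ Γ₂ Γ →
      MMerge (.free A s₁ :: Γ₁) (.free A s₂ :: Γ₂) (.free A (s₁ ∪ s₂) :: Γ)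
  | mark {s₁ s₂ : Finset Formula} {Γ₁ Γ₂ Γ : MSeq} :
      MMerge Γ₁ Γ₂ Γ →
      MMerge (.mark s₁ :: Γ₁) (.mark s₂ :: Γ₂) (.mark (s₁ ∪ s₂) :: Γ)
  | nest {B : Formula} {Δ₁ Δ₂ Δ Γ₁ Γ₂ Γ : MSeq} :
      MMerge Δ₁ Δ₂ Δ → MMerge Γ₁ Γ₂ Γ →
      MMerge (.nest B Δ₁ :: Γ₁) (.nest B Δ₂ :: Γ₂) (.nest B Δ :: Γ)

/-- Merging of marked contexts. -/
inductive MCtxMerge : MCtx → MCtx → MCtx → Prop where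
  | hole {Δ₁ Δ₂ Δ : MSeq} : MMerge Δ₁ Δ₂ Δ →
      MCtxMerge (.hole Δ₁) (.hole Δ₂) (.hole Δ)
  | nest {B : Formula} {Δ₁ Δ₂ Δ : MSeq} {c₁ c₂ c : MCtx} :
      MMerge Δ₁ Δ₂ Δ → MCtxMerge c₁ c₂ c →
      MCtxMerge (.nest B Δ₁ c₁) (.nest B Δ₂ c₂) (.nest B Δ c)

theorem AMerge.lift {A : Formula} {X₁ X₂ X : ASeq} (h : AMerge X₁ X₂ X) {M : MSeq}
    (hM : MSeq.src A M = X) :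
    ∃ M₁ M₂, MMerge M₁ M₂ M ∧ MSeq.src A M₁ = X₁ ∧ MSeq.src A M₂ = X₂ := by
  induction h generalizing M with
  | nil => exact ⟨[], [], by rw [MSeq.src_eq_nil hM]; exact .nil, rfl, rfl⟩
  | fml _ ih =>
    obtain ⟨e, N, rfl, he, hN⟩ := MSeq.src_eq_cons hM
    obtain rfl := MElem.src_eq_fml he
    obtain ⟨N₁, N₂, h, h₁, h₂⟩ := ih hN
    exact ⟨_, _, .fml h, by simp [MSeq.src, MElem.src, h₁], by simp [MSeq.src, MElem.src, h₂]⟩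
  | @dia D s₁ s₂ _ _ _ _ ih =>
    obtain ⟨e, N, rfl, he, hN⟩ := MSeq.src_eq_cons hM
    obtain ⟨N₁, N₂, h, h₁, h₂⟩ := ih hN
    cases e with
    | fml F => simp [MElem.src] at he
    | nest E l => simp [MElem.src] at he
    | fixed D' S =>
      simp only [MElem.src, AElem.dia.injEq] at he
      obtain ⟨rfl, rfl⟩ := he
      exact ⟨_, _, .fixed h, by simp [MSeq.src, MElem.src, h₁],
        by simp [MSeq.src, MElem.src, h₂]⟩
    | free D' S =>
      simp only [MElem.src, AElem.dia.injEq] at he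
      obtain ⟨rfl, rfl⟩ := he
      exact ⟨_, _, .free h, by simp [MSeq.src, MElem.src, h₁],
        by simp [MSeq.src, MElem.src, h₂]⟩
    | mark S =>
      simp only [MElem.src, AElem.dia.injEq] at he
      obtain ⟨rfl, rfl⟩ := he
      exact ⟨_, _, .mark h, by simp [MSeq.src, MElem.src, h₁],
        by simp [MSeq.src, MElem.src, h₂]⟩
  | nest _ _ ih₁ ih₂ =>
    obtain ⟨e, N, rfl, he, hN⟩ := MSeq.src_eq_cons hM
    obtain ⟨l, rfl, hl⟩ := MElem.src_eq_nest he
    obtain ⟨N₁, N₂, h, h₁, h₂⟩ := ih₂ hN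
    obtain ⟨l₁, l₂, k, k₁, k₂⟩ := ih₁ hl
    exact ⟨_, _, .nest k h, by simp [MSeq.src, MElem.src, h₁, k₁],
      by simp [MSeq.src, MElem.src, h₂, k₂]⟩

theorem ACtxMerge.lift {A : Formula} {c₁ c₂ c : ACtx} (h : ACtxMerge c₁ c₂ c) {d : MCtx}
    (hd : d.src A = c) :
    ∃ d₁ d₂, MCtxMerge d₁ d₂ d ∧ d₁.src A = c₁ ∧ d₂.src A = c₂ := by
  induction h generalizing d with
  | hole h =>
    cases d with
    | nest E l d => simp [MCtx.src] at hd
    | hole l =>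
      simp only [MCtx.src, ACtx.hole.injEq] at hd
      obtain ⟨N₁, N₂, h, h₁, h₂⟩ := h.lift hd
      exact ⟨_, _, .hole h, by simp [MCtx.src, h₁], by simp [MCtx.src, h₂]⟩
  | nest h _ ih =>
    cases d with
    | hole l => simp [MCtx.src] at hd
    | nest E l d =>
      simp only [MCtx.src, ACtx.nest.injEq] at hd
      obtain ⟨rfl, hl, hd⟩ := hd
      obtain ⟨N₁, N₂, h, h₁, h₂⟩ := h.lift hl
      obtain ⟨d₁, d₂, k, k₁, k₂⟩ := ih hd
      exact ⟨_, _, .nest h k, by simp [MCtx.src, h₁, k₁], by simp [MCtx.src, h₂, k₂]⟩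

/-- `MReal A B φ M Y`: the annotated sequent `Y` realizes the marked sequent `M`. Free diamonds are
annotated arbitrarily, the annotations of fixed ones are related by `φ`, and a marked `◇A⊥_S`
becomes `◇A⊥_{S'}, ◇B⊥_s` for some `S' ⊆ S \ {B}`. -/
inductive MReal (A B : Formula) (φ : Finset Formula → Finset Formula → Prop) :
    MSeq → ASeq → Prop where
  | nil : MReal A B φ [] []
  | fml {F : Formula} {M : MSeq} {Y : ASeq} :
      MReal A B φ M Y → MReal A B φ (.fml F :: M) (.fml F :: Y)
  | fixed {D : Formula} {S T : Finset Formula} {M : MSeq} {Y : ASeq} : φ S T →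
      MReal A B φ M Y → MReal A B φ (.fixed D S :: M) (.dia D T :: Y)
  | free {D : Formula} {S T : Finset Formula} {M : MSeq} {Y : ASeq} :
      MReal A B φ M Y → MReal A B φ (.free D S :: M) (.dia D T :: Y)
  | mark {S T s : Finset Formula} {M : MSeq} {Y : ASeq} : T ⊆ S \ {B} →
      MReal A B φ M Y → MReal A B φ (.mark S :: M) (.dia A.negate T :: .dia B.negate s :: Y)
  | nest {E : Formula} {l M : MSeq} {X Y : ASeq} :
      MReal A B φ l X → MReal A B φ M Y → MReal A B φ (.nest E l :: M) (.nest E X :: Y)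

/-- Realization of contexts. -/
inductive MCtxReal (A B : Formula) (φ : Finset Formula → Finset Formula → Prop) :
    MCtx → ACtx → Prop where
  | hole {M : MSeq} {Y : ASeq} : MReal A B φ M Y → MCtxReal A B φ (.hole M) (.hole Y)
  | nest {E : Formula} {M : MSeq} {Y : ASeq} {c : MCtx} {d : ACtx} :
      MReal A B φ M Y → MCtxReal A B φ c d → MCtxReal A B φ (.nest E M c) (.nest E Y d)

section Real

variable {A B : Formula} {φ φ₁ φ₂ : Finset Formula → Finset Formula → Prop}

theorem MReal.append {M N : MSeq} {X Y : ASeq} (h : MReal A B φ M X) (h' : MReal A B φ N Y) :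
    MReal A B φ (M ++ N) (X ++ Y) := by
  induction h with
  | nil => exact h'
  | fml _ ih => exact .fml ih
  | fixed h _ ih => exact .fixed h ih
  | free _ ih => exact .free ih
  | mark h _ ih => exact .mark h ih
  | nest h _ _ ih => exact .nest h ih

theorem MReal.of_append {M N : MSeq} {Y : ASeq} (h : MReal A B φ (M ++ N) Y) :
    ∃ Y₁ Y₂, Y = Y₁ ++ Y₂ ∧ MReal A B φ M Y₁ ∧ MReal A B φ N Y₂ := by
  induction M generalizing Y with
  | nil => exact ⟨[], Y, rfl, .nil, h⟩
  | cons e M ih =>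
    rw [List.cons_append] at h
    cases h with
    | fml h =>
      obtain ⟨Y₁, Y₂, rfl, h₁, h₂⟩ := ih h
      exact ⟨_, _, rfl, .fml h₁, h₂⟩
    | fixed hS h =>
      obtain ⟨Y₁, Y₂, rfl, h₁, h₂⟩ := ih h
      exact ⟨_, _, rfl, .fixed hS h₁, h₂⟩
    | free h =>
      obtain ⟨Y₁, Y₂, rfl, h₁, h₂⟩ := ih h
      exact ⟨_, _, rfl, .free h₁, h₂⟩
    | mark hS h =>
      obtain ⟨Y₁, Y₂, rfl, h₁, h₂⟩ := ih h
      exact ⟨_, _, rfl, .mark hS h₁, h₂⟩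
    | nest hl h =>
      obtain ⟨Y₁, Y₂, rfl, h₁, h₂⟩ := ih h
      exact ⟨_, _, rfl, .nest hl h₁, h₂⟩

theorem MReal.fill {c : MCtx} {d : ACtx} {M : MSeq} {Y : ASeq} (hc : MCtxReal A B φ c d)
    (h : MReal A B φ M Y) : MReal A B φ (c.fill M) (d.fill Y) := by
  induction hc with
  | hole h' => exact h'.append h
  | nest h' _ ih => exact .nest ih h'

theorem MReal.of_fill {c : MCtx} {M : MSeq} {Y : ASeq} (h : MReal A B φ (c.fill M) Y) :
    ∃ d X, Y = d.fill X ∧ MCtxReal A B φ c d ∧ MReal A B φ M X := by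
  induction c generalizing Y with
  | hole Δ =>
    obtain ⟨Y₁, Y₂, rfl, h₁, h₂⟩ := h.of_append
    exact ⟨.hole Y₁, Y₂, rfl, .hole h₁, h₂⟩
  | nest E Δ c ih =>
    cases h with
    | nest h h' =>
      obtain ⟨d, X, rfl, h₁, h₂⟩ := ih h
      exact ⟨.nest E _ d, X, rfl, .nest h' h₁, h₂⟩

theorem MReal.of_memb {F : Formula} {s : Finset Formula} {M : MSeq} {Y : ASeq}
    (h : MReal A B φ (memb F s :: M) Y) :
    ∃ t X, Y = emb F t :: X ∧ MReal A B φ M X := by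
  cases F <;> simp only [memb] at h <;> cases h <;>
    first | exact ⟨∅, _, rfl, ‹_›⟩ | exact ⟨_, _, rfl, ‹_›⟩

theorem MReal.of_nil {Y : ASeq} (h : MReal A B φ [] Y) : Y = [] := by
  cases h; rfl

theorem MEquiv.real {M₀ M : MSeq} (h : MEquiv M₀ M) {Y₀ : ASeq} (hY : MReal A B φ M₀ Y₀) :
    ∃ Y, AEquiv Y₀ Y ∧ MReal A B φ M Y := by
  induction h generalizing Y₀ with
  | nil => exact ⟨Y₀, .of_perm (.refl _), hY⟩
  | @cons e Γ Δ _ ih =>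
    obtain ⟨Y₁, Y₂, rfl, h₁, h₂⟩ := MReal.of_append (M := [e]) hY
    obtain ⟨Y, h₃, h₄⟩ := ih h₂
    exact ⟨Y₁ ++ Y, h₃.append_left _, h₁.append h₄⟩
  | consNest _ _ ih₁ ih₂ =>
    cases hY with
    | nest h h' =>
      obtain ⟨Y, h₁, h₂⟩ := ih₁ h
      obtain ⟨Z, h₃, h₄⟩ := ih₂ h'
      exact ⟨_, .consNest h₁ h₃, .nest h₂ h₄⟩
  | swap a b Γ =>
    obtain ⟨Y₁, Y₂, rfl, h₁, h₂⟩ := MReal.of_append (M := [a]) hY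
    obtain ⟨Y₂, Y₃, rfl, h₂, h₃⟩ := MReal.of_append (M := [b]) h₂
    refine ⟨Y₂ ++ (Y₁ ++ Y₃), .of_perm ?_, h₂.append (h₁.append h₃)⟩
    rw [← List.append_assoc, ← List.append_assoc]
    exact List.perm_append_comm.append_right _
  | trans _ _ ih₁ ih₂ =>
    obtain ⟨Y, h₁, h₂⟩ := ih₁ hY
    obtain ⟨Z, h₃, h₄⟩ := ih₂ h₂
    exact ⟨Z, h₁.trans h₃, h₄⟩

theorem MMerge.real {M₁ M₂ M : MSeq} (h : MMerge M₁ M₂ M) {Y₁ Y₂ : ASeq}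
    (h₁ : MReal A B Eq M₁ Y₁) (h₂ : MReal A B Eq M₂ Y₂) :
    ∃ Y, AMerge Y₁ Y₂ Y ∧ MReal A B Eq M Y := by
  induction h generalizing Y₁ Y₂ with
  | nil => cases h₁; cases h₂; exact ⟨[], .nil, .nil⟩
  | fml _ ih =>
    cases h₁ with | fml h₁ => cases h₂ with | fml h₂ =>
    obtain ⟨Y, k, h⟩ := ih h₁ h₂
    exact ⟨_, .fml k, .fml h⟩
  | fixed _ ih =>
    cases h₁ with | fixed k₁ h₁ => cases h₂ with | fixed k₂ h₂ =>
    obtain ⟨Y, k, h⟩ := ih h₁ h₂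
    exact ⟨_, .dia k, .fixed (by rw [k₁, k₂]) h⟩
  | free _ ih =>
    cases h₁ with | free h₁ => cases h₂ with | free h₂ =>
    obtain ⟨Y, k, h⟩ := ih h₁ h₂
    exact ⟨_, .dia k, .free h⟩
  | mark _ ih =>
    cases h₁ with | mark k₁ h₁ => cases h₂ with | mark k₂ h₂ =>
    obtain ⟨Y, k, h⟩ := ih h₁ h₂
    refine ⟨_, .dia (.dia k), .mark ?_ h⟩
    rw [Finset.union_sdiff_distrib]
    exact Finset.union_subset_union k₁ k₂
  | nest _ _ ih₁ ih₂ =>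
    cases h₁ with | nest k₁ h₁ => cases h₂ with | nest k₂ h₂ =>
    obtain ⟨X, k, h⟩ := ih₁ k₁ k₂
    obtain ⟨Y, k', h'⟩ := ih₂ h₁ h₂
    exact ⟨_, .nest k k', .nest h h'⟩

theorem MCtxMerge.real {c₁ c₂ c : MCtx} (h : MCtxMerge c₁ c₂ c) {d₁ d₂ : ACtx}
    (h₁ : MCtxReal A B Eq c₁ d₁) (h₂ : MCtxReal A B Eq c₂ d₂) :
    ∃ d, ACtxMerge d₁ d₂ d ∧ MCtxReal A B Eq c d := by
  induction h generalizing d₁ d₂ with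
  | hole h =>
    cases h₁ with | hole h₁ => cases h₂ with | hole h₂ =>
    obtain ⟨Y, k, h⟩ := h.real h₁ h₂
    exact ⟨_, .hole k, .hole h⟩
  | nest h _ ih =>
    cases h₁ with | nest h₁ k₁ => cases h₂ with | nest h₂ k₂ =>
    obtain ⟨Y, k, h⟩ := h.real h₁ h₂
    obtain ⟨d, k', h'⟩ := ih k₁ k₂
    exact ⟨_, .nest k k', .nest h h'⟩

theorem MReal.merge_self (hφ : ∀ S T₁ T₂, φ₁ S T₁ → φ₂ S T₂ → φ S (T₁ ∪ T₂)) {M : MSeq}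
    {Y₁ Y₂ : ASeq} (h₁ : MReal A B φ₁ M Y₁) (h₂ : MReal A B φ₂ M Y₂) :
    ∃ Y, AMerge Y₁ Y₂ Y ∧ MReal A B φ M Y := by
  induction h₁ generalizing Y₂ with
  | nil => cases h₂; exact ⟨[], .nil, .nil⟩
  | fml _ ih =>
    cases h₂ with | fml h₂ =>
    obtain ⟨Y, k, h⟩ := ih h₂
    exact ⟨_, .fml k, .fml h⟩
  | fixed k₁ _ ih =>
    cases h₂ with | fixed k₂ h₂ =>
    obtain ⟨Y, k, h⟩ := ih h₂
    exact ⟨_, .dia k, .fixed (hφ _ _ _ k₁ k₂) h⟩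
  | free _ ih =>
    cases h₂ with | free h₂ =>
    obtain ⟨Y, k, h⟩ := ih h₂
    exact ⟨_, .dia k, .free h⟩
  | mark k₁ _ ih =>
    cases h₂ with | mark k₂ h₂ =>
    obtain ⟨Y, k, h⟩ := ih h₂
    exact ⟨_, .dia (.dia k), .mark (Finset.union_subset k₁ k₂) h⟩
  | nest _ _ ih₁ ih₂ =>
    cases h₂ with | nest k₂ h₂ =>
    obtain ⟨X, k, h⟩ := ih₁ k₂
    obtain ⟨Y, k', h'⟩ := ih₂ h₂
    exact ⟨_, .nest k k', .nest h h'⟩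

theorem MCtxReal.merge_self (hφ : ∀ S T₁ T₂, φ₁ S T₁ → φ₂ S T₂ → φ S (T₁ ∪ T₂)) {c : MCtx}
    {d₁ d₂ : ACtx} (h₁ : MCtxReal A B φ₁ c d₁) (h₂ : MCtxReal A B φ₂ c d₂) :
    ∃ d, ACtxMerge d₁ d₂ d ∧ MCtxReal A B φ c d := by
  induction h₁ generalizing d₂ with
  | hole h₁ =>
    cases h₂ with | hole h₂ =>
    obtain ⟨Y, k, h⟩ := h₁.merge_self hφ h₂
    exact ⟨_, .hole k, .hole h⟩
  | nest h₁ _ ih =>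
    cases h₂ with | nest h₂ k₂ =>
    obtain ⟨Y, k, h⟩ := h₁.merge_self hφ h₂
    obtain ⟨d, k', h'⟩ := ih k₂
    exact ⟨_, .nest k k', .nest h h'⟩

end Real

/-- `Desc F l`: the sequent `l` contains the result of decomposing `F` by logical rules. -/
def Desc : Formula → MSeq → Prop
  | .pos a, l => .fml (.pos a) ∈ l
  | .neg a, l => .fml (.neg a) ∈ l
  | .and G H, l => .fml (.and G H) ∈ l ∨ Desc G l ∨ Desc H l
  | .or G H, l => .fml (.or G H) ∈ l ∨ (Desc G l ∧ Desc H l)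
  | .box G, l => .fml (.box G) ∈ l ∨ ∃ l', .nest G l' ∈ l ∧ Desc G l'
  | .dia G, l => ∃ s, .free G s ∈ l

theorem Desc.of_mem {F : Formula} {s : Finset Formula} {l : MSeq} (h : memb F s ∈ l) :
    Desc F l := by
  cases F <;> simp only [memb] at h <;> simp only [Desc] <;>
    first | exact h | exact .inl h | exact ⟨_, h⟩

theorem Desc.mono {l l₀ : MSeq} (h₁ : ∀ F s, memb F s ∈ l → Desc F l₀)
    (h₂ : ∀ E l', .nest E l' ∈ l → ∃ l₀', .nest E l₀' ∈ l₀ ∧ ∀ G, Desc G l' → Desc G l₀')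
    {F : Formula} (h : Desc F l) : Desc F l₀ := by
  induction F with
  | pos a => exact h₁ (.pos a) ∅ h
  | neg a => exact h₁ (.neg a) ∅ h
  | and G H ihG ihH =>
    rcases h with h | h | h
    · exact h₁ (.and G H) ∅ h
    · exact .inr (.inl (ihG h))
    · exact .inr (.inr (ihH h))
  | or G H ihG ihH =>
    rcases h with h | ⟨h, h'⟩
    · exact h₁ (.or G H) ∅ h
    · exact .inr ⟨ihG h, ihH h'⟩
  | box G _ =>
    rcases h with h | ⟨l', h, h'⟩
    · exact h₁ (.box G) ∅ h
    · obtain ⟨l₀', k, k'⟩ := h₂ _ _ h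
      exact .inr ⟨l₀', k, k' _ h'⟩
  | dia G _ =>
    obtain ⟨s, h⟩ := h
    exact h₁ (.dia G) s h

theorem Desc.subset {l l₀ : MSeq} (hl : l ⊆ l₀) {F : Formula} (h : Desc F l) : Desc F l₀ :=
  h.mono (fun _ _ h => .of_mem (hl h)) (fun _ l' h => ⟨l', hl h, fun _ h => h⟩)

/-- Every bracket annotated with `B` contains a decomposition of `B`. -/
inductive Good (B : Formula) : MSeq → Prop where
  | mk {l : MSeq} : (∀ l', .nest B l' ∈ l → Desc B l') →
      (∀ E l', .nest E l' ∈ l → Good B l') → Good B l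

/-- Every bracket annotated with `B` in the scope of a mark contains a decomposition of `B`. -/
inductive WellMarked (B : Formula) : MSeq → Prop where
  | mk {l : MSeq} : (∀ S, .mark S ∈ l → Good B l) →
      (∀ E l', .nest E l' ∈ l → WellMarked B l') → WellMarked B l

theorem Good.desc {B : Formula} {l l' : MSeq} (h : Good B l) (h' : .nest B l' ∈ l) :
    Desc B l' := by
  cases h with | mk h₁ _ => exact h₁ _ h'

theorem Good.of_nest {B E : Formula} {l l' : MSeq} (h : Good B l) (h' : .nest E l' ∈ l) :
    Good B l' := by
  cases h with | mk _ h₂ => exact h₂ _ _ h'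

theorem WellMarked.good {B : Formula} {S : Finset Formula} {l : MSeq} (h : WellMarked B l)
    (h' : .mark S ∈ l) : Good B l := by
  cases h with | mk h₁ _ => exact h₁ _ h'

theorem WellMarked.of_nest {B E : Formula} {l l' : MSeq} (h : WellMarked B l)
    (h' : .nest E l' ∈ l) : WellMarked B l' := by
  cases h with | mk _ h₂ => exact h₂ _ _ h'

theorem Good.subset {B : Formula} {l l₀ : MSeq} (h : Good B l) (hl : l₀ ⊆ l) : Good B l₀ :=
  .mk (fun _ h' => h.desc (hl h')) (fun _ _ h' => h.of_nest (hl h'))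

theorem WellMarked.subset {B : Formula} {l l₀ : MSeq} (h : WellMarked B l) (hl : l₀ ⊆ l) :
    WellMarked B l₀ :=
  .mk (fun _ h' => (h.good (hl h')).subset hl) (fun _ _ h' => h.of_nest (hl h'))

theorem Good.append {B : Formula} {l l₀ : MSeq} (h : Good B l) (h₀ : Good B l₀) :
    Good B (l ++ l₀) := by
  refine .mk (fun l' h' => ?_) (fun E l' h' => ?_) <;> rcases List.mem_append.1 h' with h' | h'
  exacts [h.desc h', h₀.desc h', h.of_nest h', h₀.of_nest h']

/-- Replacing `l` by `l₀` preserves decompositions and well-markedness. -/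
structure Refines (B : Formula) (l l₀ : MSeq) : Prop where
  desc_memb : ∀ F s, memb F s ∈ l → Desc F l₀
  desc_nest : ∀ E l', .nest E l' ∈ l →
    ∃ l₀', .nest E l₀' ∈ l₀ ∧ ∀ G, Desc G l' → Desc G l₀'
  mark_mem : ∀ S, .mark S ∈ l₀ → ∃ T, .mark T ∈ l
  good : Good B l → Good B l₀
  wellMarked : WellMarked B l → WellMarked B l₀

namespace Refines

variable {B : Formula}

theorem desc {l l₀ : MSeq} (h : Refines B l l₀) {F : Formula} (hF : Desc F l) : Desc F l₀ :=
  hF.mono h.desc_memb h.desc_nest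

theorem of_mem_iff {l l₀ : MSeq} (h : ∀ x, x ∈ l ↔ x ∈ l₀) : Refines B l l₀ where
  desc_memb _ _ h' := .of_mem ((h _).1 h')
  desc_nest _ l' h' := ⟨l', (h _).1 h', fun _ h => h⟩
  mark_mem S h' := ⟨S, (h _).2 h'⟩
  good h' := h'.subset fun _ => (h _).2
  wellMarked h' := h'.subset fun _ => (h _).2

theorem refl (l : MSeq) : Refines B l l := of_mem_iff fun _ => .rfl

theorem trans {l l₀ l₁ : MSeq} (h : Refines B l l₀) (h' : Refines B l₀ l₁) : Refines B l l₁ where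
  desc_memb _ _ k := h'.desc (h.desc_memb _ _ k)
  desc_nest _ _ k := by
    obtain ⟨l₂, k₁, k₂⟩ := h.desc_nest _ _ k
    obtain ⟨l₃, k₃, k₄⟩ := h'.desc_nest _ _ k₁
    exact ⟨l₃, k₃, fun G hG => k₄ G (k₂ G hG)⟩
  mark_mem _ k := by
    obtain ⟨T, k⟩ := h'.mark_mem _ k
    exact h.mark_mem _ k
  good k := h'.good (h.good k)
  wellMarked k := h'.wellMarked (h.wellMarked k)

theorem append {l₁ l₂ k₁ k₂ : MSeq} (h : Refines B l₁ k₁) (h' : Refines B l₂ k₂) :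
    Refines B (l₁ ++ l₂) (k₁ ++ k₂) := by
  have s₁ : l₁ ⊆ l₁ ++ l₂ := List.subset_append_left _ _
  have s₂ : l₂ ⊆ l₁ ++ l₂ := List.subset_append_right _ _
  have t₁ : k₁ ⊆ k₁ ++ k₂ := List.subset_append_left _ _
  have t₂ : k₂ ⊆ k₁ ++ k₂ := List.subset_append_right _ _
  have hmark : ∀ S, .mark S ∈ k₁ ++ k₂ → ∃ T, .mark T ∈ l₁ ++ l₂ := fun S hS => by
    rcases List.mem_append.1 hS with hS | hS
    · obtain ⟨T, hT⟩ := h.mark_mem S hS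
      exact ⟨T, s₁ hT⟩
    · obtain ⟨T, hT⟩ := h'.mark_mem S hS
      exact ⟨T, s₂ hT⟩
  have hgood : Good B (l₁ ++ l₂) → Good B (k₁ ++ k₂) := fun hg =>
    (h.good (hg.subset s₁)).append (h'.good (hg.subset s₂))
  refine ⟨fun F s hF => ?_, fun E l' hE => ?_, hmark, hgood, fun hw => .mk ?_ ?_⟩
  · rcases List.mem_append.1 hF with hF | hF
    · exact (h.desc_memb F s hF).subset t₁
    · exact (h'.desc_memb F s hF).subset t₂
  · rcases List.mem_append.1 hE with hE | hE
    · obtain ⟨l₀, m, m'⟩ := h.desc_nest E l' hE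
      exact ⟨l₀, t₁ m, m'⟩
    · obtain ⟨l₀, m, m'⟩ := h'.desc_nest E l' hE
      exact ⟨l₀, t₂ m, m'⟩
  · intro S hS
    obtain ⟨T, hT⟩ := hmark S hS
    exact hgood (hw.good hT)
  · intro E l' hE
    rcases List.mem_append.1 hE with hE | hE
    · exact (h.wellMarked (hw.subset s₁)).of_nest hE
    · exact (h'.wellMarked (hw.subset s₂)).of_nest hE

theorem nest (E : Formula) {l l₀ : MSeq} (h : Refines B l l₀) :
    Refines B [.nest E l] [.nest E l₀] where
  desc_memb F s hF := by cases F <;> simp [memb] at hF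
  desc_nest _ _ hE := by
    simp only [List.mem_singleton, MElem.nest.injEq] at hE
    obtain ⟨rfl, rfl⟩ := hE
    exact ⟨l₀, by simp, fun _ => h.desc⟩
  mark_mem _ hS := by simp at hS
  good hg := by
    refine .mk (fun l' hl => ?_) (fun F l' hl => ?_) <;>
      simp only [List.mem_singleton, MElem.nest.injEq] at hl <;> obtain ⟨rfl, rfl⟩ := hl
    · exact h.desc (hg.desc (by simp))
    · exact h.good (hg.of_nest (List.mem_singleton.2 rfl))
  wellMarked hw := by
    refine .mk (fun S hS => by simp at hS) (fun F l' hl => ?_)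
    simp only [List.mem_singleton, MElem.nest.injEq] at hl
    obtain ⟨rfl, rfl⟩ := hl
    exact h.wellMarked (hw.of_nest (List.mem_singleton.2 rfl))

theorem fill (c : MCtx) {l l₀ : MSeq} (h : Refines B l l₀) :
    Refines B (c.fill l) (c.fill l₀) := by
  induction c with
  | hole Δ => exact (refl Δ).append h
  | nest E Δ c ih => exact (nest E ih).append (refl Δ)

/-- A sequent without brackets and marks refines any sequent whose formulas it decomposes. -/
theorem of_flat {l l₀ : MSeq} (h : ∀ F s, memb F s ∈ l → Desc F l₀) (hl : ∀ E l', .nest E l' ∉ l)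
    (h₁ : ∀ E l', .nest E l' ∉ l₀) (h₂ : ∀ S, .mark S ∈ l₀ → ∃ T, .mark T ∈ l) :
    Refines B l l₀ where
  desc_memb := h
  desc_nest _ _ hE := absurd hE (hl _ _)
  mark_mem := h₂
  good _ := .mk (fun _ k => absurd k (h₁ _ _)) (fun _ _ k => absurd k (h₁ _ _))
  wellMarked _ := .mk (fun _ _ => .mk (fun _ k => absurd k (h₁ _ _))
    (fun _ _ k => absurd k (h₁ _ _))) (fun _ _ k => absurd k (h₁ _ _))

end Refines

theorem memb_ne_nest (F E : Formula) (s : Finset Formula) (l : MSeq) : memb F s ≠ .nest E l := by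
  cases F <;> simp [memb]

theorem memb_ne_mark (F : Formula) (s S : Finset Formula) : memb F s ≠ .mark S := by
  cases F <;> simp [memb]

section Rules

variable {B : Formula}

theorem Refines.memb_nil (F : Formula) (s : Finset Formula) : Refines B [] [memb F s] :=
  .of_flat (by simp) (by simp) (by simp [(memb_ne_nest _ _ _ _).symm])
    (by simp [(memb_ne_mark _ _ _).symm])

theorem Refines.and_left (F G : Formula) (s : Finset Formula) :
    Refines B [.fml (.and F G)] [memb F s] := by
  refine .of_flat (fun F' s' h => ?_) (by simp) (by simp [(memb_ne_nest _ _ _ _).symm])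
    (by simp [(memb_ne_mark _ _ _).symm])
  cases F' <;> simp [memb] at h
  obtain ⟨rfl, rfl⟩ := h
  exact .inr (.inl (.of_mem (s := s) (by simp)))

theorem Refines.and_right (F G : Formula) (s : Finset Formula) :
    Refines B [.fml (.and F G)] [memb G s] := by
  refine .of_flat (fun F' s' h => ?_) (by simp) (by simp [(memb_ne_nest _ _ _ _).symm])
    (by simp [(memb_ne_mark _ _ _).symm])
  cases F' <;> simp [memb] at h
  obtain ⟨rfl, rfl⟩ := h
  exact .inr (.inr (.of_mem (s := s) (by simp)))

theorem Refines.or (F G : Formula) (s t : Finset Formula) :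
    Refines B [.fml (.or F G)] [memb F s, memb G t] := by
  refine .of_flat (fun F' s' h => ?_) (by simp) (by simp [(memb_ne_nest _ _ _ _).symm])
    (by simp [(memb_ne_mark _ _ _).symm])
  cases F' <;> simp [memb] at h
  obtain ⟨rfl, rfl⟩ := h
  exact .inr ⟨.of_mem (s := s) (by simp), .of_mem (s := t) (by simp)⟩

theorem Refines.box (F D : Formula) (s t : Finset Formula) :
    Refines B [.fml (.box F)] [.nest F [.free D s, memb F t]] := by
  have hF : Desc F [.free D s, memb F t] := .of_mem (s := t) (by simp)
  have hg : Good B [.free D s, memb F t] :=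
    .mk (by simp [(memb_ne_nest _ _ _ _).symm]) (by simp [(memb_ne_nest _ _ _ _).symm])
  refine ⟨fun F' s' h => ?_, by simp, by simp, fun _ => .mk ?_ ?_, fun _ => .mk (by simp) ?_⟩
  · cases F' <;> simp [memb] at h
    subst h
    exact .inr ⟨_, by simp, hF⟩
  · intro l' h
    simp only [List.mem_singleton, MElem.nest.injEq] at h
    obtain ⟨rfl, rfl⟩ := h
    exact hF
  · intro E l' h
    simp only [List.mem_singleton, MElem.nest.injEq] at h
    obtain ⟨rfl, rfl⟩ := h
    exact hg
  · intro E l' h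
    simp only [List.mem_singleton, MElem.nest.injEq] at h
    obtain ⟨rfl, rfl⟩ := h
    exact .mk (fun _ _ => hg) (by simp [(memb_ne_nest _ _ _ _).symm])

theorem Refines.fixed (D : Formula) (S T : Finset Formula) :
    Refines B [.fixed D S] [.fixed D T] :=
  .of_flat (fun F s h => by cases F <;> simp [memb] at h) (by simp) (by simp) (by simp)

theorem Refines.free (D : Formula) (S T : Finset Formula) :
    Refines B [.free D S] [.free D T] := by
  refine .of_flat (fun F s h => ?_) (by simp) (by simp) (by simp)
  cases F <;> simp [memb] at h
  obtain ⟨rfl, rfl⟩ := h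
  exact ⟨T, by simp⟩

theorem Refines.mark (S T : Finset Formula) : Refines B [.mark S] [.mark T] :=
  .of_flat (fun F s h => by cases F <;> simp [memb] at h) (by simp) (by simp) (by simp)

theorem MEquiv.refines {M₀ M : MSeq} (h : MEquiv M₀ M) : Refines B M M₀ := by
  induction h with
  | nil => exact .refl _
  | @cons e Γ Δ _ ih => exact (Refines.refl [e]).append ih
  | consNest _ _ ih₁ ih₂ => exact (Refines.nest _ ih₁).append ih₂
  | swap a b Γ => exact .of_mem_iff fun x => by simp; tauto
  | trans _ _ ih₁ ih₂ => exact ih₂.trans ih₁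

theorem MMerge.refines {M₁ M₂ M : MSeq} (h : MMerge M₁ M₂ M) :
    Refines B M M₁ ∧ Refines B M M₂ := by
  induction h with
  | nil => exact ⟨.refl _, .refl _⟩
  | @fml C _ _ _ _ ih =>
    exact ⟨(Refines.refl [.fml C]).append ih.1, (Refines.refl [.fml C]).append ih.2⟩
  | fixed _ ih => exact ⟨(Refines.fixed _ _ _).append ih.1, (Refines.fixed _ _ _).append ih.2⟩
  | free _ ih => exact ⟨(Refines.free _ _ _).append ih.1, (Refines.free _ _ _).append ih.2⟩
  | mark _ ih => exact ⟨(Refines.mark _ _).append ih.1, (Refines.mark _ _).append ih.2⟩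
  | nest _ _ ih₁ ih₂ =>
    exact ⟨(Refines.nest _ ih₁.1).append ih₂.1, (Refines.nest _ ih₁.2).append ih₂.2⟩

theorem MCtxMerge.refines {c₁ c₂ c : MCtx} (h : MCtxMerge c₁ c₂ c) (l : MSeq) :
    Refines B (c.fill l) (c₁.fill l) ∧ Refines B (c.fill l) (c₂.fill l) := by
  induction h with
  | hole h => exact ⟨h.refines.1.append (.refl l), h.refines.2.append (.refl l)⟩
  | nest h _ ih =>
    exact ⟨(Refines.nest _ ih.1).append h.refines.1, (Refines.nest _ ih.2).append h.refines.2⟩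

end Rules

/-- Prepending a sequent to a context, up to exchange. -/
def ACtx.prepend (R : ASeq) : ACtx → ACtx
  | .hole l => .hole (R ++ l)
  | .nest E l d => .nest E (R ++ l) d

theorem ACtx.prepend_fill (R : ASeq) (d : ACtx) (Γ : ASeq) :
    ((d.prepend R).fill Γ).Perm (R ++ d.fill Γ) := by
  cases d with
  | hole l => simp [ACtx.prepend, ACtx.fill]
  | nest E l d => exact List.perm_middle.symm

theorem ADeriv.dia_append {P : Formula → Prop} {c d : ACtx} {F E : Formula} {S s : Finset Formula}
    {Δ R₁ R₂ : ASeq}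
    (h : ADeriv P (c.fill (d.fill [.nest E (emb F s :: Δ)] ++ (R₁ ++ .dia F S :: R₂)))) :
    ADeriv P (c.fill (d.fill [.nest E Δ] ++ (R₁ ++ .dia F (insert E S) :: R₂))) := by
  have key : ∀ Z T, ((d.fill Z) ++ (R₁ ++ .dia F T :: R₂)).Perm
      ((d.prepend (R₁ ++ R₂)).fill Z ++ [.dia F T]) := fun Z T => by
    refine .trans ?_ ((ACtx.prepend_fill _ _ _).symm.append_right _)
    refine .trans (List.perm_append_comm (l₂ := R₁ ++ .dia F T :: R₂)) ?_
    refine .trans (List.perm_middle.append_right _) ?_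
    exact (List.perm_append_singleton _ _).symm
  exact .exch (.fill c (.of_perm (key _ _).symm)) (.dia (.exch (.fill c (.of_perm (key _ _))) h))

/-- Some realization of the marked sequent is derivable. -/
def MProv (A B : Formula) (φ : Finset Formula → Finset Formula → Prop) (M : MSeq) : Prop :=
  ∃ Y, MReal A B φ M Y ∧ ADeriv (· = A) Y

namespace MProv

variable {A B : Formula} {φ φ₁ φ₂ : Finset Formula → Finset Formula → Prop}

theorem exch {M₀ M : MSeq} (h : MEquiv M₀ M) (hM : MProv A B φ M₀) : MProv A B φ M := by
  obtain ⟨Y₀, h₁, h₂⟩ := hM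
  obtain ⟨Y, h₃, h₄⟩ := h.real h₁
  exact ⟨Y, h₄, .exch h₃ h₂⟩

theorem and {c₁ c₂ c : MCtx} (hc : ∀ d₁ d₂, MCtxReal A B φ c₁ d₁ → MCtxReal A B φ c₂ d₂ →
      ∃ d, ACtxMerge d₁ d₂ d ∧ MCtxReal A B φ c d)
    {F G : Formula} {s t : Finset Formula}
    (h₁ : MProv A B φ (c₁.fill [memb F s])) (h₂ : MProv A B φ (c₂.fill [memb G t])) :
    MProv A B φ (c.fill [.fml (.and F G)]) := by
  obtain ⟨Y₁, r₁, d₁⟩ := h₁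
  obtain ⟨Y₂, r₂, d₂⟩ := h₂
  obtain ⟨e₁, X₁, rfl, k₁, m₁⟩ := r₁.of_fill
  obtain ⟨e₂, X₂, rfl, k₂, m₂⟩ := r₂.of_fill
  obtain ⟨_, _, rfl, n₁⟩ := m₁.of_memb
  obtain ⟨_, _, rfl, n₂⟩ := m₂.of_memb
  obtain rfl := n₁.of_nil
  obtain rfl := n₂.of_nil
  obtain ⟨e, m, k⟩ := hc _ _ k₁ k₂
  exact ⟨_, .fill k (.fml .nil), .and m d₁ d₂⟩

theorem cut {c₁ c₂ c : MCtx} (hc : ∀ d₁ d₂, MCtxReal A B φ₁ c₁ d₁ → MCtxReal A B φ₂ c₂ d₂ →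
      ∃ d, ACtxMerge d₁ d₂ d ∧ MCtxReal A B φ c d)
    {s t : Finset Formula}
    (h₁ : MProv A B φ₁ (c₁.fill [memb A s])) (h₂ : MProv A B φ₂ (c₂.fill [memb A.negate t])) :
    MProv A B φ (c.fill []) := by
  obtain ⟨Y₁, r₁, d₁⟩ := h₁
  obtain ⟨Y₂, r₂, d₂⟩ := h₂
  obtain ⟨e₁, X₁, rfl, k₁, m₁⟩ := r₁.of_fill
  obtain ⟨e₂, X₂, rfl, k₂, m₂⟩ := r₂.of_fill
  obtain ⟨_, _, rfl, n₁⟩ := m₁.of_memb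
  obtain ⟨_, _, rfl, n₂⟩ := m₂.of_memb
  obtain rfl := n₁.of_nil
  obtain rfl := n₂.of_nil
  obtain ⟨e, m, k⟩ := hc _ _ k₁ k₂
  exact ⟨_, .fill k .nil, .cut rfl m d₁ d₂⟩

theorem or {c : MCtx} {F G : Formula} {s t : Finset Formula}
    (h : MProv A B φ (c.fill [memb F s, memb G t])) : MProv A B φ (c.fill [.fml (.or F G)]) := by
  obtain ⟨Y, r, d⟩ := h
  obtain ⟨e, X, rfl, k, r₁⟩ := r.of_fill
  obtain ⟨_, _, rfl, r₂⟩ := r₁.of_memb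
  obtain ⟨_, _, rfl, r₃⟩ := r₂.of_memb
  obtain rfl := r₃.of_nil
  exact ⟨_, .fill k (.fml .nil), .or d⟩

theorem box {c : MCtx} {F : Formula} {s t : Finset Formula}
    (h : MProv A B φ (c.fill [.nest F [.free F.negate s, memb F t]])) :
    MProv A B φ (c.fill [.fml (.box F)]) := by
  obtain ⟨Y, r, d⟩ := h
  obtain ⟨e, X, rfl, k, r₁⟩ := r.of_fill
  cases r₁ with | nest r₁ r' =>
  obtain rfl := r'.of_nil
  cases r₁ with | free r₁ =>
  obtain ⟨_, _, rfl, r₂⟩ := r₁.of_memb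
  obtain rfl := r₂.of_nil
  exact ⟨_, .fill k (.fml .nil), .box d⟩

theorem dia {c d : MCtx} {F E : Formula} {s : Finset Formula} {l : MSeq} {x x' : MElem}
    (hx : ∀ Y, MReal A B φ [x] Y → ∃ R₁ T R₂, Y = R₁ ++ .dia F T :: R₂ ∧
      MReal A B φ [x'] (R₁ ++ .dia F (insert E T) :: R₂))
    (h : MProv A B φ (c.fill (d.fill [.nest E (memb F s :: l)] ++ [x]))) :
    MProv A B φ (c.fill (d.fill [.nest E l] ++ [x'])) := by
  obtain ⟨Y, r, p⟩ := h
  obtain ⟨c', X, rfl, k, r₁⟩ := r.of_fill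
  obtain ⟨X₁, X₂, rfl, r₂, rx⟩ := r₁.of_append
  obtain ⟨d', X, rfl, k', r₃⟩ := r₂.of_fill
  obtain ⟨R₁, T, R₂, rfl, rx'⟩ := hx _ rx
  cases r₃ with | nest r₃ r' =>
  obtain rfl := r'.of_nil
  obtain ⟨_, _, rfl, r₄⟩ := r₃.of_memb
  exact ⟨_, .fill k (.append (.fill k' (.nest r₄ .nil)) rx'), p.dia_append⟩

theorem dia_free {c d : MCtx} {F E : Formula} {s t t' : Finset Formula} {l : MSeq}
    (h : MProv A B φ (c.fill (d.fill [.nest E (memb F s :: l)] ++ [.free F t]))) :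
    MProv A B φ (c.fill (d.fill [.nest E l] ++ [.free F t'])) := by
  refine dia (fun Y hY => ?_) h
  cases hY with | free hY =>
  obtain rfl := hY.of_nil
  exact ⟨[], _, [], rfl, .free .nil⟩

theorem dia_mark_negate {c d : MCtx} {E : Formula} {s S : Finset Formula} {l : MSeq}
    (h : MProv A B φ (c.fill (d.fill [.nest E (memb B.negate s :: l)] ++ [.mark S]))) :
    MProv A B φ (c.fill (d.fill [.nest E l] ++ [.mark S])) := by
  refine dia (fun Y hY => ?_) h
  cases hY with | mark hS hY =>
  obtain rfl := hY.of_nil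
  exact ⟨[_], _, [], rfl, .mark hS .nil⟩

theorem dia_mark {c d : MCtx} {E : Formula} {s S : Finset Formula} {l : MSeq} (hE : E ≠ B)
    (h : MProv A B φ (c.fill (d.fill [.nest E (memb A.negate s :: l)] ++ [.mark S]))) :
    MProv A B φ (c.fill (d.fill [.nest E l] ++ [.mark (insert E S)])) := by
  refine dia (fun Y hY => ?_) h
  cases hY with | mark hS hY =>
  obtain rfl := hY.of_nil
  refine ⟨[], _, [_], rfl, .mark ?_ .nil⟩
  rw [Finset.insert_sdiff_of_notMem _ (by simpa using hE)]
  exact Finset.insert_subset_insert _ hS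

theorem dia_fixed {c d : MCtx} {F E : Formula} {s S : Finset Formula} {l : MSeq}
    (h : MProv A B Eq (c.fill (d.fill [.nest E (memb F s :: l)] ++ [.fixed F S]))) :
    MProv A B Eq (c.fill (d.fill [.nest E l] ++ [.fixed F (insert E S)])) := by
  refine dia (fun Y hY => ?_) h
  cases hY with | fixed hS hY =>
  obtain rfl := hY.of_nil
  exact ⟨[], _, [], rfl, .fixed (by rw [hS]) .nil⟩

theorem mark_mono {c : MCtx} {S T : Finset Formula} {l : MSeq} (hST : S ⊆ T)
    (h : MProv A B φ (c.fill (l ++ [.mark S]))) : MProv A B φ (c.fill (l ++ [.mark T])) := by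
  obtain ⟨Y, r, p⟩ := h
  obtain ⟨c', X, rfl, k, r₁⟩ := r.of_fill
  obtain ⟨X₁, X₂, rfl, r₂, rx⟩ := r₁.of_append
  cases rx with | mark hS rx =>
  exact ⟨_, .fill k (r₂.append (.mark (hS.trans (Finset.sdiff_subset_sdiff hST le_rfl)) rx)), p⟩

theorem id_of_real {c : MCtx} {a : ℕ} {Y : ASeq}
    (h : MReal A B φ (c.fill [.fml (.pos a), .fml (.neg a)]) Y) (hY : ASeq.diaEmpty Y) :
    MProv A B φ (c.fill [.fml (.pos a), .fml (.neg a)]) := by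
  refine ⟨Y, h, ?_⟩
  obtain ⟨c', X, rfl, k, r⟩ := h.of_fill
  cases r with | fml r =>
  cases r with | fml r =>
  cases r with | nil =>
  exact .id hY

theorem perm {c : MCtx} {l l' : MSeq} (h : l.Perm l') (hl : MProv A B φ (c.fill l)) :
    MProv A B φ (c.fill l') :=
  hl.exch (.fill c (.of_perm h))

theorem of_comp {c d : MCtx} {l : MSeq} (h : MProv A B φ ((c.comp d).fill l)) :
    MProv A B φ (c.fill (d.fill l)) :=
  h.exch (c.comp_fill d l)

theorem comp {c d : MCtx} {l : MSeq} (h : MProv A B φ (c.fill (d.fill l))) :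
    MProv A B φ ((c.comp d).fill l) :=
  h.exch (c.comp_fill d l).symm

theorem of_comp_hole {c : MCtx} {l k : MSeq} (h : MProv A B φ ((c.comp (.hole l)).fill k)) :
    MProv A B φ (c.fill (k ++ l)) :=
  h.of_comp.perm List.perm_append_comm

theorem comp_hole {c : MCtx} {l k : MSeq} (h : MProv A B φ (c.fill (k ++ l))) :
    MProv A B φ ((c.comp (.hole l)).fill k) :=
  (h.perm List.perm_append_comm).comp

theorem and_cons (hφ : ∀ S T₁ T₂, φ S T₁ → φ S T₂ → φ S (T₁ ∪ T₂))
    {c : MCtx} {l : MSeq} {F G : Formula} {s t : Finset Formula}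
    (h₁ : MProv A B φ (c.fill (memb F s :: l))) (h₂ : MProv A B φ (c.fill (memb G t :: l))) :
    MProv A B φ (c.fill (.fml (.and F G) :: l)) :=
  of_comp_hole (k := [_]) (and (fun _ _ => MCtxReal.merge_self hφ)
    (comp_hole (k := [_]) h₁) (comp_hole (k := [_]) h₂))

theorem or_cons {c : MCtx} {l : MSeq} {F G : Formula} {s t : Finset Formula}
    (h : MProv A B φ (c.fill (memb F s :: memb G t :: l))) :
    MProv A B φ (c.fill (.fml (.or F G) :: l)) :=
  of_comp_hole (k := [_]) (or (comp_hole (k := [_, _]) h))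

theorem box_cons {c : MCtx} {l : MSeq} {F : Formula} {s t : Finset Formula}
    (h : MProv A B φ (c.fill (.nest F [.free F.negate s, memb F t] :: l))) :
    MProv A B φ (c.fill (.fml (.box F) :: l)) :=
  of_comp_hole (k := [_]) (box (comp_hole (k := [_]) h))

theorem dia_cons {c : MCtx} {l l' : MSeq} {F E : Formula} {s t t' : Finset Formula}
    (h : MProv A B φ (c.fill (.nest E (memb F s :: l') :: .free F t :: l))) :
    MProv A B φ (c.fill (.nest E l' :: .free F t' :: l)) :=
  of_comp_hole (k := [_, _]) (dia_free (d := .hole []) (comp_hole (k := [_, _]) h))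

theorem of_nest {c : MCtx} {l l' k : MSeq} {E : Formula}
    (h : ∀ d : MCtx, MProv A B φ (d.fill k)) (hk : k.Perm l') :
    MProv A B φ (c.fill (.nest E l' :: l)) :=
  of_comp (d := .nest E l (.hole [])) ((h _).perm hk)

end MProv

/-- Relation forcing realizations to annotate fixed diamonds with the empty set. -/
def ToEmpty (_ T : Finset Formula) : Prop := T = ∅

theorem ToEmpty.union (S T₁ T₂ : Finset Formula) (h₁ : ToEmpty S T₁) (h₂ : ToEmpty S T₂) :
    ToEmpty S (T₁ ∪ T₂) := by
  simp_all [ToEmpty]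

theorem MReal.exists_toEmpty (A B : Formula) (M : MSeq) :
    ∃ Y, MReal A B ToEmpty M Y ∧ ASeq.diaEmpty Y := by
  induction M using MSeq.ind with
  | nil => exact ⟨[], .nil, trivial⟩
  | fml F l ih => obtain ⟨Y, h, h'⟩ := ih; exact ⟨_, .fml h, trivial, h'⟩
  | fixed D S l ih => obtain ⟨Y, h, h'⟩ := ih; exact ⟨_, .fixed rfl h, rfl, h'⟩
  | free D S l ih => obtain ⟨Y, h, h'⟩ := ih; exact ⟨.dia D ∅ :: Y, .free h, rfl, h'⟩
  | mark S l ih =>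
    obtain ⟨Y, h, h'⟩ := ih
    exact ⟨.dia A.negate ∅ :: .dia B.negate ∅ :: Y, .mark (Finset.empty_subset _) h, rfl, rfl, h'⟩
  | nest E l' l ih' ih =>
    obtain ⟨Y, h, h'⟩ := ih
    obtain ⟨X, k, k'⟩ := ih'
    exact ⟨_, .nest k h, k', h'⟩

theorem MReal.exists_eq (A B : Formula) (M : MSeq) (hM : ASeq.diaEmpty (MSeq.src A M)) :
    ∃ Y, MReal A B Eq M Y ∧ ASeq.diaEmpty Y := by
  induction M using MSeq.ind with
  | nil => exact ⟨[], .nil, trivial⟩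
  | fml F l ih => obtain ⟨Y, h, h'⟩ := ih hM.2; exact ⟨_, .fml h, trivial, h'⟩
  | fixed D S l ih => obtain ⟨Y, h, h'⟩ := ih hM.2; exact ⟨_, .fixed rfl h, hM.1, h'⟩
  | free D S l ih => obtain ⟨Y, h, h'⟩ := ih hM.2; exact ⟨.dia D ∅ :: Y, .free h, rfl, h'⟩
  | mark S l ih =>
    obtain ⟨Y, h, h'⟩ := ih hM.2
    exact ⟨.dia A.negate ∅ :: .dia B.negate ∅ :: Y, .mark (Finset.empty_subset _) h, rfl, rfl, h'⟩
  | nest E l' l ih' ih =>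
    obtain ⟨Y, h, h'⟩ := ih hM.2
    obtain ⟨X, k, k'⟩ := ih' hM.1
    exact ⟨_, .nest k h, k', h'⟩

theorem List.exists_perm_cons {α : Type*} {a : α} {l : List α} (h : a ∈ l) :
    ∃ r, l.Perm (a :: r) := by
  obtain ⟨l₁, l₂, rfl⟩ := List.append_of_mem h
  exact ⟨l₁ ++ l₂, List.perm_middle⟩

/-- Generalized identity: a decomposition of `F` together with `F⊥` is derivable. -/
theorem Desc.mprov {A B : Formula} (F : Formula) {c : MCtx} {l : MSeq} {s : Finset Formula}
    (h : Desc F l) : MProv A B ToEmpty (c.fill (memb F.negate s :: l)) := by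
  have ident : ∀ (c : MCtx) (a : ℕ) (r : MSeq),
      MProv A B ToEmpty (c.fill (.fml (.pos a) :: .fml (.neg a) :: r)) := fun c a r => by
    obtain ⟨Y, h, h'⟩ := MReal.exists_toEmpty A B
      ((c.comp (.hole r)).fill [.fml (.pos a), .fml (.neg a)])
    exact MProv.of_comp_hole (k := [_, _]) (MProv.id_of_real h h')
  induction F generalizing c l s with
  | pos a =>
    obtain ⟨r, hr⟩ := List.exists_perm_cons h
    exact (ident c a r).perm ((List.Perm.swap _ _ _).trans (hr.symm.cons _))
  | neg a =>
    obtain ⟨r, hr⟩ := List.exists_perm_cons h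
    exact (ident c a r).perm (hr.symm.cons _)
  | and G H ihG ihH =>
    rcases h with h | h | h
    · obtain ⟨r, hr⟩ := List.exists_perm_cons h
      refine MProv.perm (hr.symm.cons _) (.perm (.swap _ _ _) ?_)
      refine .and_cons ToEmpty.union (s := ∅) (t := ∅) ?_ ?_ <;>
        refine .perm (.swap _ _ _) (.or_cons (s := ∅) (t := ∅) ?_)
      · exact ihG (.of_mem (s := ∅) (by simp))
      · exact .perm (.swap _ _ _) (ihH (.of_mem (s := ∅) (by simp)))
    · exact .or_cons (s := ∅) (t := ∅) (ihG (h.subset (by simp)))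
    · exact .or_cons (s := ∅) (t := ∅) (.perm (.swap _ _ _) (ihH (h.subset (by simp))))
  | or G H ihG ihH =>
    rcases h with h | ⟨h, h'⟩
    · obtain ⟨r, hr⟩ := List.exists_perm_cons h
      refine MProv.perm (hr.symm.cons _) (.perm (.swap _ _ _) ?_)
      refine .or_cons (s := ∅) (t := ∅) (.perm (l := .fml (.and G.negate H.negate) ::
        memb G ∅ :: memb H ∅ :: r) ?_ ?_)
      · exact (List.Perm.swap _ _ _).trans ((List.Perm.swap _ _ _).cons _)
      · exact .and_cons ToEmpty.union (s := ∅) (t := ∅) (ihG (.of_mem (s := ∅) (by simp)))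
          (ihH (.of_mem (s := ∅) (by simp)))
    · exact .and_cons ToEmpty.union (s := ∅) (t := ∅) (ihG h) (ihH h')
  | box G ih =>
    have key : ∀ l' r, Desc G l' → MProv A B ToEmpty
        (c.fill (.nest G l' :: .free G.negate s :: r)) := fun l' r hl =>
      .dia_cons (s := ∅) (t := s) (.of_nest (fun _ => ih hl) (.refl _))
    rcases h with h | ⟨l', h, hl⟩
    · obtain ⟨r, hr⟩ := List.exists_perm_cons h
      refine MProv.perm (hr.symm.cons _) (.perm (.swap _ _ _) ?_)
      exact .box_cons (s := ∅) (t := ∅) (key _ r (.of_mem (s := ∅) (by simp)))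
    · obtain ⟨r, hr⟩ := List.exists_perm_cons h
      exact MProv.perm (hr.symm.cons _) (.perm (.swap _ _ _) (key _ r hl))
  | dia G ih =>
    obtain ⟨t, h⟩ := h
    obtain ⟨r, hr⟩ := List.exists_perm_cons h
    refine MProv.perm (hr.symm.cons _) (.box_cons (s := ∅) (t := ∅) ?_)
    refine .dia_cons (s := ∅) (t := ∅) (.of_nest (k := memb G.negate ∅ :: memb G ∅ ::
      [.free G.negate.negate ∅]) (fun _ => ih (.of_mem (s := ∅) (by simp))) ?_)
    exact (List.Perm.swap _ _ _).trans ((List.Perm.swap _ _ _).cons _)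

/-- A use of the marked `◇A⊥` on a bracket annotated with `B` is replaced by a cut on `A`, whose
other premise is derived by applying `◇B⊥` to the bracket. -/
theorem MProv.cut_mark {A B : Formula} {c d : MCtx} {s S : Finset Formula} {l : MSeq}
    (hl : Desc B l)
    (h : MProv A B Eq (c.fill (d.fill [.nest B (memb A.negate s :: l)] ++ [.mark S]))) :
    MProv A B Eq (c.fill (d.fill [.nest B l] ++ [.mark S])) := by
  let e : MCtx := c.comp ((MCtx.hole [.mark S]).comp (d.comp (.nest B [] (.hole l))))
  have he : ∀ k, MEquiv (e.fill k) (c.fill (d.fill [.nest B (k ++ l)] ++ [.mark S])) := fun k => by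
    refine (c.comp_fill _ _).trans (.fill c ?_)
    refine (MCtx.comp_fill _ _ _).trans (.trans ?_ (.of_perm List.perm_append_comm))
    refine .append_left _ ((MCtx.comp_fill _ _ _).trans (.fill d ?_))
    exact .consNest (.of_perm List.perm_append_comm) .nil
  have key : MProv A B ToEmpty (e.fill [memb A ∅]) := by
    refine MProv.exch (he _).symm (.dia_mark_negate (s := ∅) ?_)
    have : MEquiv ((c.comp ((MCtx.hole [.mark S]).comp (d.comp (.nest B [] (.hole []))))).fill
        (memb B.negate ∅ :: memb A ∅ :: l))
        (c.fill (d.fill [.nest B (memb B.negate ∅ :: memb A ∅ :: l)] ++ [.mark S])) := by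
      refine (c.comp_fill _ _).trans (.fill c ?_)
      refine (MCtx.comp_fill _ _ _).trans (.trans ?_ (.of_perm List.perm_append_comm))
      exact .append_left _ (MCtx.comp_fill _ _ _)
    exact (Desc.mprov B (hl.subset (by simp))).exch this
  refine MProv.exch (he []) (.cut (fun _ _ => MCtxReal.merge_self ?_) key
    (.exch (he [memb A.negate s]).symm h))
  rintro S T₁ T₂ rfl rfl
  exact (Finset.empty_union S).symm

theorem Good.desc_of_fill {B : Formula} {d : MCtx} {l : MSeq} (h : Good B (d.fill [.nest B l])) :
    Desc B l := by
  induction d with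
  | hole Δ => exact h.desc (l' := l) (by simp [MCtx.fill])
  | nest E Δ d ih => exact ih (h.of_nest (E := E) (by simp [MCtx.fill]))

theorem WellMarked.of_fill {B : Formula} {c : MCtx} {l : MSeq} (h : WellMarked B (c.fill l)) :
    WellMarked B l := by
  induction c with
  | hole Δ => exact h.subset (List.subset_append_right _ _)
  | nest E Δ c ih => exact ih (h.of_nest (E := E) (by simp [MCtx.fill]))

theorem MSeq.src_fill_memb (A : Formula) (c : MCtx) (F : Formula) (s : Finset Formula) :
    MSeq.src A (c.fill [memb F s]) = (c.src A).fill [emb F s] := by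
  simp [MCtx.src_fill, MSeq.src, MElem.src_memb]

theorem ADeriv.mprov {A B : Formula} {X : ASeq} (h : ADeriv (· = A) X) {M : MSeq}
    (hX : MSeq.src A M = X) (hM : WellMarked B M) : MProv A B Eq M := by
  induction h generalizing M with
  | id hd =>
    obtain ⟨Y, hY, hY'⟩ := MReal.exists_eq A B M (by rwa [hX])
    obtain ⟨c, N, rfl, rfl, hN⟩ := MSeq.src_eq_fill hX
    obtain ⟨e₁, N, rfl, h₁, hN⟩ := MSeq.src_eq_cons hN
    obtain ⟨e₂, rfl, h₂⟩ := MSeq.src_eq_singleton hN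
    obtain rfl := MElem.src_eq_fml h₁
    obtain rfl := MElem.src_eq_fml h₂
    exact .id_of_real hY hY'
  | @and _ _ _ F G s t hc _ _ ih₁ ih₂ =>
    obtain ⟨c, N, rfl, hc', hN⟩ := MSeq.src_eq_fill hX
    obtain ⟨e, rfl, he⟩ := MSeq.src_eq_singleton hN
    obtain rfl := MElem.src_eq_fml he
    obtain ⟨c₁, c₂, m, rfl, rfl⟩ := hc.lift hc'
    exact .and (fun _ _ => m.real)
      (ih₁ (MSeq.src_fill_memb ..)
        (((m.refines _).1.trans (.fill _ (.and_left F G s))).wellMarked hM))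
      (ih₂ (MSeq.src_fill_memb ..)
        (((m.refines _).2.trans (.fill _ (.and_right F G t))).wellMarked hM))
  | @or _ F G s t _ ih =>
    obtain ⟨c, N, rfl, rfl, hN⟩ := MSeq.src_eq_fill hX
    obtain ⟨e, rfl, he⟩ := MSeq.src_eq_singleton hN
    obtain rfl := MElem.src_eq_fml he
    exact .or (ih (by simp [MCtx.src_fill, MSeq.src, MElem.src_memb])
      ((Refines.fill c (.or F G s t)).wellMarked hM))
  | @box _ F S s _ ih =>
    obtain ⟨c, N, rfl, rfl, hN⟩ := MSeq.src_eq_fill hX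
    obtain ⟨e, rfl, he⟩ := MSeq.src_eq_singleton hN
    obtain rfl := MElem.src_eq_fml he
    exact .box (ih (by simp [MCtx.src_fill, MSeq.src, MElem.src, MElem.src_memb])
      ((Refines.fill c (.box F F.negate S s)).wellMarked hM))
  | @dia _ _ F E S s _ _ ih =>
    obtain ⟨c, N, rfl, rfl, hN⟩ := MSeq.src_eq_fill hX
    obtain ⟨N₁, N₂, rfl, h₁, h₂⟩ := MSeq.src_eq_append hN
    obtain ⟨x, rfl, hx⟩ := MSeq.src_eq_singleton h₂
    obtain ⟨d, N₁, rfl, rfl, h₃⟩ := MSeq.src_eq_fill h₁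
    obtain ⟨e, rfl, he⟩ := MSeq.src_eq_singleton h₃
    obtain ⟨l, rfl, rfl⟩ := MElem.src_eq_nest he
    have premise : ∀ y, y.src A = .dia F S → Refines B [x] [y] →
        MProv A B Eq (c.fill (d.fill [.nest E (memb F s :: l)] ++ [y])) := fun y hy hr =>
      ih (by simp [MCtx.src_fill, MSeq.src_append, MSeq.src, MElem.src, MElem.src_memb, hy])
        ((Refines.fill c ((Refines.fill d
          (.nest E ((Refines.memb_nil F s).append (.refl l)))).append hr)).wellMarked hM)
    cases x with
    | fml G => simp [MElem.src] at hx
    | nest G k => simp [MElem.src] at hx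
    | fixed G T =>
      simp only [MElem.src, AElem.dia.injEq] at hx
      obtain ⟨rfl, rfl⟩ := hx
      exact .dia_fixed (premise (.fixed G S) rfl (.fixed _ _ _))
    | free G T =>
      simp only [MElem.src, AElem.dia.injEq] at hx
      obtain ⟨rfl, rfl⟩ := hx
      exact .dia_free (premise (.free G S) rfl (.free _ _ _))
    | mark T =>
      simp only [MElem.src, AElem.dia.injEq] at hx
      obtain ⟨rfl, rfl⟩ := hx
      have hp := premise (.mark S) rfl (.mark _ _)
      by_cases hE : E = B
      · subst hE
        have hg : Good E (d.fill [.nest E l]) :=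
          (hM.of_fill.good (S := insert E S) (by simp)).subset (List.subset_append_left _ _)
        exact .mark_mono (Finset.subset_insert _ _) (.cut_mark hg.desc_of_fill hp)
      · exact .dia_mark hE hp
  | @cut _ _ _ F s t hF hc _ _ ih₁ ih₂ =>
    subst hF
    obtain ⟨c, N, rfl, hc', hN⟩ := MSeq.src_eq_fill hX
    obtain rfl := MSeq.src_eq_nil hN
    obtain ⟨c₁, c₂, m, rfl, rfl⟩ := hc.lift hc'
    exact .cut (fun _ _ => m.real)
      (ih₁ (MSeq.src_fill_memb ..)
        (((m.refines _).1.trans (.fill _ (.memb_nil _ s))).wellMarked hM))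
      (ih₂ (MSeq.src_fill_memb ..)
        (((m.refines _).2.trans (.fill _ (.memb_nil _ t))).wellMarked hM))
  | exch hE _ ih =>
    obtain ⟨M₀, h₁, h₂⟩ := hE.lift hX
    exact .exch h₁ (ih h₂ (h₁.refines.wellMarked hM))

mutual
/-- Mark all diamonds as fixed. -/
def AElem.fix : AElem → MElem
  | .fml F => .fml F
  | .dia D S => .fixed D S
  | .nest E l => .nest E (ASeq.fix l)
def ASeq.fix : ASeq → MSeq
  | [] => []
  | e :: l => e.fix :: ASeq.fix l
end

def ACtx.fix : ACtx → MCtx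
  | .hole l => .hole (ASeq.fix l)
  | .nest E l c => .nest E (ASeq.fix l) c.fix

theorem ASeq.src_fix (A : Formula) (X : ASeq) : MSeq.src A (ASeq.fix X) = X := by
  induction X using ASeq.ind <;> simp_all [ASeq.fix, AElem.fix, MSeq.src, MElem.src]

theorem ACtx.src_fix (A : Formula) (c : ACtx) : c.fix.src A = c := by
  induction c <;> simp_all [ACtx.fix, MCtx.src, ASeq.src_fix]

theorem MReal.of_fix {A B : Formula} {X Y : ASeq} (h : MReal A B Eq (ASeq.fix X) Y) : Y = X := by
  induction X using ASeq.ind generalizing Y with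
  | nil => exact h.of_nil
  | fml F l ih =>
    cases h with | fml h =>
    rw [ih h]
  | dia D S l ih =>
    cases h with | fixed hS h =>
    rw [ih h, hS]
  | nest E l' l ih' ih =>
    cases h with | nest h' h =>
    rw [ih h, ih' h']

theorem MCtxReal.of_fix {A B : Formula} {c d : ACtx} (h : MCtxReal A B Eq c.fix d) : d = c := by
  induction c generalizing d with
  | hole l =>
    cases h with | hole h =>
    rw [h.of_fix]
  | nest E l c ih =>
    cases h with | nest h k =>
    rw [h.of_fix, ih k]

theorem WellMarked.cons {B : Formula} {e : MElem} {l : MSeq} (he : ∀ S, e ≠ .mark S)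
    (hl : ∀ S, .mark S ∉ l) (hn : ∀ E l', e = .nest E l' → WellMarked B l')
    (h : WellMarked B l) : WellMarked B (e :: l) := by
  refine .mk (fun S hS => ?_) (fun E l' hE => ?_)
  · rcases List.mem_cons.1 hS with hS | hS
    exacts [absurd hS.symm (he S), absurd hS (hl S)]
  · rcases List.mem_cons.1 hE with hE | hE
    exacts [hn _ _ hE.symm, h.of_nest hE]

theorem ASeq.mark_notMem_fix (X : ASeq) (S : Finset Formula) : .mark S ∉ ASeq.fix X := by
  induction X using ASeq.ind <;> simp_all [ASeq.fix, AElem.fix]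

theorem ASeq.wellMarked_fix (B : Formula) (X : ASeq) : WellMarked B (ASeq.fix X) := by
  induction X using ASeq.ind with
  | nil => exact .mk (by simp [ASeq.fix]) (by simp [ASeq.fix])
  | fml F l ih => exact .cons (by simp [AElem.fix]) l.mark_notMem_fix (by simp [AElem.fix]) ih
  | dia D S l ih => exact .cons (by simp [AElem.fix]) l.mark_notMem_fix (by simp [AElem.fix]) ih
  | nest E l' l ih' ih =>
    refine .cons (by simp [AElem.fix]) l.mark_notMem_fix (fun F k h => ?_) ih
    simp only [AElem.fix, MElem.nest.injEq] at h
    exact h.2 ▸ ih'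

theorem ASeq.good_fix {B : Formula} {X : ASeq} (h : ASeq.noBr B X) : Good B (ASeq.fix X) := by
  induction X using ASeq.ind with
  | nil => exact .mk (by simp [ASeq.fix]) (by simp [ASeq.fix])
  | fml F l ih => exact .append (l := [.fml F]) (.mk (by simp) (by simp)) (ih h.2)
  | dia D S l ih => exact .append (l := [.fixed D S]) (.mk (by simp) (by simp)) (ih h.2)
  | nest E l' l ih' ih =>
    refine .append (l := [.nest E (ASeq.fix l')]) (.mk (fun k hk => ?_) (fun F k hk => ?_)) (ih h.2)
    all_goals simp only [List.mem_singleton, MElem.nest.injEq] at hk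
    · exact absurd hk.1.symm h.1.1
    · exact hk.2 ▸ ih' h.1.2

theorem ACtx.wellMarked_fix {B E : Formula} (c : ACtx) {l : MSeq} (h : WellMarked B l) :
    WellMarked B (c.fix.fill [.nest E l]) := by
  have nest : ∀ {E l} (X : ASeq), WellMarked B l → WellMarked B (.nest E l :: ASeq.fix X) :=
    fun X h => .cons (by simp) X.mark_notMem_fix (by rintro _ _ ⟨⟩; exact h) (X.wellMarked_fix B)
  induction c with
  | hole X => exact (nest (E := E) X h).subset (by simp [ACtx.fix, MCtx.fill])
  | nest F X c ih => exact nest X ih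

/-- first step of diagonal-formula elimination. -/
theorem diag_elim_first_step (A B C : Formula) (S : Finset Formula)
    (Δ : ASeq) (c : ACtx)
    (hB : B ∈ S) (hno : ASeq.noBr B Δ)
    (h : ADeriv (· = A) (c.fill [.nest C (.dia A.negate S :: Δ)])) :
    ∃ S' ⊆ S \ {B}, ∃ s : Finset Formula,
      ADeriv (· = A)
        (c.fill [.nest C (.dia A.negate S' :: .dia B.negate s :: Δ)]) := by
  have hg : Good B (.mark S :: ASeq.fix Δ) :=
    .append (l := [.mark S]) (.mk (by simp) (by simp)) (ASeq.good_fix hno)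
  have hw : WellMarked B (.mark S :: ASeq.fix Δ) :=
    .mk (fun _ _ => hg) fun E l' hE =>
      (ASeq.wellMarked_fix B Δ).of_nest (E := E) (by simpa using hE)
  obtain ⟨Y, r, hY⟩ := h.mprov (M := c.fix.fill [.nest C (.mark S :: ASeq.fix Δ)])
    (by simp [MCtx.src_fill, ACtx.src_fix, MSeq.src, MElem.src, ASeq.src_fix])
    (c.wellMarked_fix hw)
  obtain ⟨d, X, rfl, hd, r₁⟩ := r.of_fill
  obtain rfl := hd.of_fix
  cases r₁ with | nest r₁ r' =>
  obtain rfl := r'.of_nil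
  cases r₁ with | mark hS r₁ =>
  obtain rfl := r₁.of_fix
  exact ⟨_, hS, _, hY⟩
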